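/- Bayes consistency of the binary two-temperature loss (Theorem 2): let 0 < t₁ < 2, 0 < t₂ < 2, and η ∈ (0,1), and define the optimal margin a* = log_{t₂}( η^{1/t₁} / (η^{1/t₁} + (1-η)^{1/t₁}) ) - log_{t₂}( (1-η)^{1/t₁} / (η^{1/t₁} + (1-η)^{1/t₁}) ). Then a* > 0 if and only if η > 1/2, a* < 0 if and only if η < 1/2, and a* = 0 if and only if η = 1/2; that is, sign(a*) = sign(η - 1/2), so the loss is classification-calibrated. -/

import Mathlib

/-- The tempered logarithm `log_t`: for `t ≠ 1` it is `(x^(1-t) - 1)/(1-t)`;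
for `t = 1` it is the natural logarithm. -/
noncomputable def tlog (t x : ℝ) : ℝ :=
  if t = 1 then Real.log x else (x ^ (1 - t) - 1) / (1 - t)

theorem strictMonoOn_tlog (t : ℝ) : StrictMonoOn (tlog t) (Set.Ioi 0) := by
  intro x (hx : 0 < x) y _ hxy
  unfold tlog
  split_ifs with ht
  · exact Real.log_lt_log hx hxy
  · rcases lt_or_gt_of_ne ht with ht | ht
    · have : 0 < 1 - t := sub_pos.mpr ht
      gcongr
    · have hexp : 1 - t < 0 := sub_neg.mpr ht
      have hpow : y ^ (1 - t) < x ^ (1 - t) := Real.rpow_lt_rpow_of_neg hx hxy hexp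
      exact div_lt_div_of_neg_of_lt hexp (sub_lt_sub_right hpow 1)

theorem strictMonoOn_tlog_rpow_div (t : ℝ) {p c : ℝ} (hp : 0 < p) (hc : 0 < c) :
    StrictMonoOn (fun x => tlog t (x ^ p / c)) (Set.Ioi 0) := by
  have hpow : StrictMonoOn (fun x : ℝ => x ^ p / c) (Set.Ioi 0) := fun x hx y _ hxy =>
    div_lt_div_of_pos_right (Real.rpow_lt_rpow (le_of_lt hx) hxy hp) hc
  exact (strictMonoOn_tlog t).comp hpow fun x hx => div_pos (Real.rpow_pos_of_pos hx p) hc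

/-- The optimal margin `a*` of the binary two-temperature loss at conditional probability `η`,
encoded by its closed form: the difference of the tempered logarithms of the normalized weights
`η ^ (1 / t₁)` and `(1 - η) ^ (1 / t₁)`. -/
noncomputable def optimalMargin (t₁ t₂ η : ℝ) : ℝ :=
  tlog t₂ (η ^ (1 / t₁) / (η ^ (1 / t₁) + (1 - η) ^ (1 / t₁))) -
    tlog t₂ ((1 - η) ^ (1 / t₁) / (η ^ (1 / t₁) + (1 - η) ^ (1 / t₁)))

theorem binary_bayes_consistent_general {t₁ : ℝ} (t₂ : ℝ) (ht₁ : 0 < t₁) {η : ℝ}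
    (hη0 : 0 < η) (hη1 : η < 1) :
    (0 < optimalMargin t₁ t₂ η ↔ 1 / 2 < η) ∧
    (optimalMargin t₁ t₂ η < 0 ↔ η < 1 / 2) ∧
    (optimalMargin t₁ t₂ η = 0 ↔ η = 1 / 2) := by
  have hη : 0 < 1 - η := sub_pos.mpr hη1
  have hnorm : 0 < η ^ (1 / t₁) + (1 - η) ^ (1 / t₁) := by positivity
  -- With the common normalizer held fixed, `a*` is the increment of one map from `1 - η` to `η`.
  have hmono := strictMonoOn_tlog_rpow_div t₂ (one_div_pos.mpr ht₁) hnorm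
  refine ⟨sub_pos.trans ((hmono.lt_iff_lt hη hη0).trans ?_),
    sub_neg.trans ((hmono.lt_iff_lt hη0 hη).trans ?_),
    sub_eq_zero.trans ((hmono.injOn.eq_iff hη0 hη).trans ?_)⟩ <;>
  constructor <;> intro <;> linarith

/-- Bayes consistency of the binary two-temperature loss: the optimal margin
`a* = log_{t₂}(η^(1/t₁)/(η^(1/t₁)+(1-η)^(1/t₁))) -
      log_{t₂}((1-η)^(1/t₁)/(η^(1/t₁)+(1-η)^(1/t₁)))`
has the same sign as `η - 1/2`. -/
theorem binary_bayes_consistent (t₁ t₂ : ℝ) (ht₁0 : 0 < t₁) (ht₁2 : t₁ < 2)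
    (ht₂0 : 0 < t₂) (ht₂2 : t₂ < 2) (η : ℝ) (hη0 : 0 < η) (hη1 : η < 1) :
    (0 < tlog t₂ (η ^ (1 / t₁) / (η ^ (1 / t₁) + (1 - η) ^ (1 / t₁))) -
        tlog t₂ ((1 - η) ^ (1 / t₁) / (η ^ (1 / t₁) + (1 - η) ^ (1 / t₁))) ↔
      1 / 2 < η) ∧
    (tlog t₂ (η ^ (1 / t₁) / (η ^ (1 / t₁) + (1 - η) ^ (1 / t₁))) -
        tlog t₂ ((1 - η) ^ (1 / t₁) / (η ^ (1 / t₁) + (1 - η) ^ (1 / t₁))) < 0 ↔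
      η < 1 / 2) ∧
    (tlog t₂ (η ^ (1 / t₁) / (η ^ (1 / t₁) + (1 - η) ^ (1 / t₁))) -
        tlog t₂ ((1 - η) ^ (1 / t₁) / (η ^ (1 / t₁) + (1 - η) ^ (1 / t₁))) = 0 ↔
      η = 1 / 2) :=
  binary_bayes_consistent_general t₂ ht₁0 hη0 hη1
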